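/- Let A = (F, FK)Π ∈ ℝ^{d×m}, where F ∈ ℝ^{d×r} has rank r, K ∈ ℝ^{r×ℓ} (ℓ = m − r) is nonnegative with columns k_1, …, k_ℓ of unit 1-norm, and Π is an m×m permutation matrix. Let N ∈ ℝ^{d×m}, Ã = A + N, let Ã^r be a best rank-r approximation of Ã in the spectral norm, set N̄ = N − (Ã − Ã^r), write N̄Π⁻¹ = (N̄⁽¹⁾, N̄⁽²⁾), and set F̂ = F + N̄⁽¹⁾ and B̂ = F̂K + (−N̄⁽¹⁾K + N̄⁽²⁾), so that Ã^r Π⁻¹ = (F̂, B̂). Let σ = σ_min(F), μ = max_i ‖k_i‖_2, and ε = σ(1 − μ)/4. Suppose ‖N‖_2 < ε. Then F̂ᵀF̂ is invertible, and for L = F̂(F̂ᵀF̂)⁻²F̂ᵀ every column f̂_j of F̂ satisfies f̂_jᵀ L f̂_j = 1 while every column b̂_i of B̂ satisfies b̂_iᵀ L b̂_i < 1; consequently, the set 𝓘 = {i : (ã^r_i)ᵀ L ã^r_i = 1}, where ã^r_i denotes the i-th column of Ã^r, is exactly the set of r indices at which Π places the columns of F̂, and the submatrix Ã(𝓘) of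 Ã satisfies ‖Ã(𝓘) − F‖_2 ≤ ‖N‖_2 < ε. -/

import Mathlib

open Matrix

noncomputable def euclNorm {n : ℕ} (v : Fin n → ℝ) : ℝ := Real.sqrt (∑ i, v i ^ 2)

noncomputable def oneNorm {n : ℕ} (v : Fin n → ℝ) : ℝ := ∑ i, |v i|

noncomputable def specNorm {d m : ℕ} (M : Matrix (Fin d) (Fin m) ℝ) : ℝ :=
  ‖LinearMap.toContinuousLinearMap (Matrix.toEuclideanLin M)‖

noncomputable def sigmaMin {d r : ℕ} (M : Matrix (Fin d) (Fin r) ℝ) : ℝ :=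
  sInf ((fun x => euclNorm (M *ᵥ x)) '' {x : Fin r → ℝ | euclNorm x = 1})


/-! The quadratic form of `L = F̂(F̂ᴴF̂)⁻²F̂ᴴ` is `b ↦ ‖F̂⁺ b‖²`, where `F̂⁺ = (F̂ᴴF̂)⁻¹F̂ᴴ` is the
pseudoinverse of `F̂`. Since `F̂⁺ F̂ = 1`, it takes the value `1` at the columns of `F̂ = F + E`.
A column of `B̂` is `F k + e = F̂ k + (e - E k)` with `k` a column of `K`; here `E` and `e` are
parts of `N̄ = Ã^r - A`, so their norms are at most `η = 2‖N‖` because `Ã^r` is at least as close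
to `Ã` as `A` is. As `F̂` is bounded below by `σ - η`, the norm of `F̂⁺` is at most `(σ - η)⁻¹`, and
`‖F̂⁺ (F k + e)‖ ≤ ‖k‖ + η (1 + ‖k‖) / (σ - η)`. This is less than `1` exactly when
`2 η < σ (1 - ‖k‖)`, whence the factor `4` in `ε`. -/

theorem rank_le_card_of_eq_sumElim {R d m r ℓ : Type*} [CommSemiring R] [StrongRankCondition R]
    [Fintype m] [Fintype r] {F : Matrix d r R} {K : Matrix r ℓ R} {p : m → r ⊕ ℓ}
    {A : Matrix d m R} (hA : ∀ i j, A i j = Sum.elim (F i) ((F * K) i) (p j)) :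
    A.rank ≤ Fintype.card r := by
  classical
  have hA_mul : A = F * (fromCols 1 K).submatrix id p := by
    ext i j
    rw [hA, mul_apply]
    rcases hp : p j with a | b <;> simp [hp, mul_apply, one_apply]
  rw [hA_mul]
  exact (rank_mul_le_left _ _).trans F.rank_le_card_width

section L2Norm

open WithLp (toLp)

open scoped Matrix.Norms.L2Operator ComplexOrder

variable {𝕜 d m n r ℓ : Type*} [RCLike 𝕜] [Fintype d] [Fintype m] [Fintype n]

theorem norm_toLp_mulVec_le [DecidableEq n] (M : Matrix d n 𝕜) (x : n → 𝕜) :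
    ‖toLp 2 (M *ᵥ x)‖ ≤ ‖M‖ * ‖toLp 2 x‖ :=
  l2_opNorm_mulVec M (toLp 2 x)

theorem norm_toLp_col_le [DecidableEq n] (M : Matrix d n 𝕜) (j : n) :
    ‖toLp 2 (M.col j)‖ ≤ ‖M‖ := by
  simpa using norm_toLp_mulVec_le M (Pi.single j 1)

theorem l2_opNorm_submatrix_id_le [DecidableEq m] [DecidableEq n] (M : Matrix d m 𝕜) {e : n → m}
    (he : Function.Injective e) : ‖M.submatrix id e‖ ≤ ‖M‖ := by
  set E : Matrix m n 𝕜 := (1 : Matrix m m 𝕜).submatrix id e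
  have hE_isometry : Eᴴ * E = 1 := by
    ext i j
    simp [E, mul_apply, one_apply, he.eq_iff]
  have hE_norm : ‖E‖ ≤ 1 := by
    have hE_sq : ‖E‖ * ‖E‖ ≤ 1 := by
      rw [← l2_opNorm_conjTranspose_mul_self, hE_isometry, ← diagonal_one, l2_opNorm_diagonal]
      exact (pi_norm_le_iff_of_nonneg zero_le_one).2 fun _ ↦ norm_one.le
    exact (le_abs_self _).trans (abs_le_one_iff_mul_self_le_one.2 hE_sq)
  calc ‖M.submatrix id e‖ = ‖M * E‖ := by
        congr 1
        ext i j
        simp [E, mul_apply, one_apply]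
    _ ≤ ‖M‖ * ‖E‖ := l2_opNorm_mul M E
    _ ≤ ‖M‖ := mul_le_of_le_one_right (norm_nonneg M) hE_norm

/-- `M` is bounded below by `s` in the Euclidean norm, i.e. `s ≤ σ_min(M)`. The inequality is
required of all vectors rather than of an infimum over unit vectors, so that it is not
affected by the absence of unit vectors when `M` has no columns. -/
def BoundedBelow (M : Matrix d n 𝕜) (s : ℝ) : Prop :=
  ∀ x : n → 𝕜, s * ‖toLp 2 x‖ ≤ ‖toLp 2 (M *ᵥ x)‖

/-- The left inverse `(HᴴH)⁻¹Hᴴ` of a matrix `H` of full column rank, that is, its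
Moore-Penrose pseudoinverse. If `HᴴH` is singular, this is the junk value `0`. -/
noncomputable def leftPinv [DecidableEq n] (H : Matrix d n 𝕜) : Matrix n d 𝕜 :=
  (Hᴴ * H)⁻¹ * Hᴴ

/-- The matrix `L = H(HᴴH)⁻²Hᴴ` of the ellipsoid `{x | xᴴLx = 1}` through the columns of `H`. -/
noncomputable def ellipsoidMatrix [DecidableEq n] (H : Matrix d n 𝕜) : Matrix d d 𝕜 :=
  H * ((Hᴴ * H)⁻¹ * (Hᴴ * H)⁻¹) * Hᴴ

theorem dotProduct_ellipsoidMatrix_mulVec [DecidableEq n] (H : Matrix d n 𝕜) (b : d → 𝕜) :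
    star b ⬝ᵥ (ellipsoidMatrix H *ᵥ b) = ((‖toLp 2 (leftPinv H *ᵥ b)‖ ^ 2 : ℝ) : 𝕜) := by
  have hL : ellipsoidMatrix H = (leftPinv H)ᴴ * leftPinv H := by
    simp only [ellipsoidMatrix, leftPinv, conjTranspose_mul, conjTranspose_nonsing_inv,
      conjTranspose_conjTranspose, Matrix.mul_assoc]
  rw [hL, ← mulVec_mulVec, dotProduct_mulVec, vecMul_conjTranspose, star_star, RCLike.ofReal_pow,
    ← inner_self_eq_norm_sq_to_K (𝕜 := 𝕜), EuclideanSpace.inner_toLp_toLp, dotProduct_comm]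

theorem leftPinv_mul_self [DecidableEq n] {H : Matrix d n 𝕜} (hH : IsUnit (Hᴴ * H)) :
    leftPinv H * H = 1 := by
  rw [leftPinv, Matrix.mul_assoc, nonsing_inv_mul _ ((isUnit_iff_isUnit_det _).1 hH)]

theorem dotProduct_ellipsoidMatrix_mulVec_col [DecidableEq n] {H : Matrix d n 𝕜}
    (hH : IsUnit (Hᴴ * H)) (j : n) : star (H.col j) ⬝ᵥ (ellipsoidMatrix H *ᵥ H.col j) = 1 := by
  rw [dotProduct_ellipsoidMatrix_mulVec, ← mulVec_single_one, mulVec_mulVec,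
    leftPinv_mul_self hH, one_mulVec]
  simp

theorem isStarProjection_mul_leftPinv [DecidableEq n] {H : Matrix d n 𝕜}
    (hH : IsUnit (Hᴴ * H)) : IsStarProjection (H * leftPinv H) where
  isIdempotentElem := by
    rw [IsIdempotentElem, Matrix.mul_assoc, ← Matrix.mul_assoc (leftPinv H), leftPinv_mul_self hH,
      Matrix.one_mul]
  isSelfAdjoint := by
    rw [IsSelfAdjoint, star_eq_conjTranspose]
    simp only [leftPinv, conjTranspose_mul, conjTranspose_nonsing_inv,
      conjTranspose_conjTranspose, Matrix.mul_assoc]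

namespace BoundedBelow

variable {s : ℝ}

theorem add [DecidableEq n] {M : Matrix d n 𝕜} (hM : BoundedBelow M s) (E : Matrix d n 𝕜) :
    BoundedBelow (M + E) (s - ‖E‖) := fun x ↦ by
  have hMx : ‖toLp 2 (M *ᵥ x)‖ ≤ ‖toLp 2 ((M + E) *ᵥ x)‖ + ‖toLp 2 (E *ᵥ x)‖ := by
    simpa [add_mulVec] using norm_sub_le (toLp 2 ((M + E) *ᵥ x)) (toLp 2 (E *ᵥ x))
  linarith [hM x, norm_toLp_mulVec_le E x]

theorem isUnit_conjTranspose_mul_self [DecidableEq n] {H : Matrix d n 𝕜} (hH : BoundedBelow H s)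
    (hs : 0 < s) : IsUnit (Hᴴ * H) := by
  rw [← mulVec_injective_iff_isUnit, ← coe_mulVecLin, injective_iff_map_eq_zero]
  intro x hx
  have hHx : H *ᵥ x = 0 := (conjTranspose_mul_self_mulVec_eq_zero H x).1 hx
  have hx_norm : s * ‖toLp 2 x‖ ≤ 0 := by simpa [hHx] using hH x
  simpa using nonpos_of_mul_nonpos_right hx_norm hs

theorem mul_norm_leftPinv_mulVec_le [DecidableEq n] {H : Matrix d n 𝕜} (hH : BoundedBelow H s)
    (hs : 0 < s) (c : d → 𝕜) : s * ‖toLp 2 (leftPinv H *ᵥ c)‖ ≤ ‖toLp 2 c‖ := by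
  classical
  have hproj := isStarProjection_mul_leftPinv (hH.isUnit_conjTranspose_mul_self hs)
  calc s * ‖toLp 2 (leftPinv H *ᵥ c)‖ ≤ ‖toLp 2 ((H * leftPinv H) *ᵥ c)‖ := by
        simpa only [mulVec_mulVec] using hH (leftPinv H *ᵥ c)
    _ ≤ ‖H * leftPinv H‖ * ‖toLp 2 c‖ := norm_toLp_mulVec_le _ c
    _ ≤ ‖toLp 2 c‖ := mul_le_of_le_one_left (norm_nonneg _) hproj.norm_le

theorem norm_leftPinv_add_mulVec_lt_one [DecidableEq n] {F E : Matrix d n 𝕜} {k : n → 𝕜}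
    {e : d → 𝕜} {η : ℝ} (hF : BoundedBelow F s) (hs : 0 ≤ s) (hE : ‖E‖ ≤ η)
    (he : ‖toLp 2 e‖ ≤ η) (hη : 2 * η < s * (1 - ‖toLp 2 k‖)) :
    ‖toLp 2 (leftPinv (F + E) *ᵥ (F *ᵥ k + e))‖ < 1 := by
  have hsk : 0 ≤ s * ‖toLp 2 k‖ := by positivity
  have hsE : 0 < s - ‖E‖ := by linarith [norm_nonneg E]
  have hFE := hF.add E
  have hsplit : leftPinv (F + E) *ᵥ (F *ᵥ k + e) = k + leftPinv (F + E) *ᵥ (e - E *ᵥ k) := by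
    have hFk : F *ᵥ k + e = (F + E) *ᵥ k + (e - E *ᵥ k) := by rw [add_mulVec]; abel
    rw [hFk, mulVec_add, mulVec_mulVec,
      leftPinv_mul_self (hFE.isUnit_conjTranspose_mul_self hsE), one_mulVec]
  refine lt_of_mul_lt_mul_left ?_ hsE.le
  calc (s - ‖E‖) * ‖toLp 2 (leftPinv (F + E) *ᵥ (F *ᵥ k + e))‖
      ≤ (s - ‖E‖) * (‖toLp 2 k‖ + ‖toLp 2 (leftPinv (F + E) *ᵥ (e - E *ᵥ k))‖) := by
        rw [hsplit, WithLp.toLp_add]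
        gcongr
        exact norm_add_le _ _
    _ ≤ (s - ‖E‖) * ‖toLp 2 k‖ + ‖toLp 2 (e - E *ᵥ k)‖ := by
        rw [mul_add]
        gcongr
        exact hFE.mul_norm_leftPinv_mulVec_le hsE _
    _ ≤ (s - ‖E‖) * ‖toLp 2 k‖ + (‖toLp 2 e‖ + ‖E‖ * ‖toLp 2 k‖) := by
        grw [WithLp.toLp_sub, norm_sub_le, norm_toLp_mulVec_le E k]
    _ < (s - ‖E‖) * 1 := by linarith

theorem dotProduct_ellipsoidMatrix_add_mulVec_lt_one [DecidableEq n] {F E : Matrix d n 𝕜}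
    {k : n → 𝕜} {e : d → 𝕜} {η : ℝ} (hF : BoundedBelow F s) (hs : 0 ≤ s) (hE : ‖E‖ ≤ η)
    (he : ‖toLp 2 e‖ ≤ η) (hη : 2 * η < s * (1 - ‖toLp 2 k‖)) :
    star (F *ᵥ k + e) ⬝ᵥ (ellipsoidMatrix (F + E) *ᵥ (F *ᵥ k + e)) < 1 := by
  rw [dotProduct_ellipsoidMatrix_mulVec, ← RCLike.ofReal_one, RCLike.ofReal_lt_ofReal]
  exact pow_lt_one₀ (norm_nonneg _) (hF.norm_leftPinv_add_mulVec_lt_one hs hE he hη) two_ne_zero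

end BoundedBelow

theorem euclNorm_eq_norm {n : ℕ} (v : Fin n → ℝ) : euclNorm v = ‖toLp 2 v‖ := by
  simp [euclNorm, EuclideanSpace.norm_eq]

theorem sigmaMin_nonneg {d n : ℕ} (M : Matrix (Fin d) (Fin n) ℝ) : 0 ≤ sigmaMin M :=
  Real.sInf_nonneg <| Set.forall_mem_image.2 fun _ _ ↦ Real.sqrt_nonneg _

theorem boundedBelow_sigmaMin {d n : ℕ} (M : Matrix (Fin d) (Fin n) ℝ) :
    BoundedBelow M (sigmaMin M) := fun x ↦ by
  rcases eq_or_ne x 0 with rfl | hx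
  · simp
  have hx_norm : 0 < ‖toLp 2 x‖ := by simpa using hx
  have hbdd : BddBelow ((fun x ↦ euclNorm (M *ᵥ x)) '' {x | euclNorm x = 1}) :=
    ⟨0, Set.forall_mem_image.2 fun _ _ ↦ Real.sqrt_nonneg _⟩
  have hunit : euclNorm (‖toLp 2 x‖⁻¹ • x) = 1 := by
    rw [euclNorm_eq_norm, WithLp.toLp_smul, norm_smul, norm_inv, norm_norm,
      inv_mul_cancel₀ hx_norm.ne']
  rw [← le_div_iff₀ hx_norm]
  calc sigmaMin M ≤ euclNorm (M *ᵥ (‖toLp 2 x‖⁻¹ • x)) :=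
        csInf_le hbdd (Set.mem_image_of_mem _ hunit)
    _ = ‖toLp 2 (M *ᵥ x)‖ / ‖toLp 2 x‖ := by
        rw [euclNorm_eq_norm, mulVec_smul, WithLp.toLp_smul, norm_smul, norm_inv, norm_norm,
          div_eq_inv_mul]

theorem norm_toLp_col_le_iSup_euclNorm {d n : ℕ} (M : Matrix (Fin d) (Fin n) ℝ) (j : Fin n) :
    ‖toLp 2 (M.col j)‖ ≤ ⨆ j, euclNorm fun i ↦ M i j := by
  rw [← euclNorm_eq_norm]
  exact le_ciSup (f := fun j ↦ euclNorm fun i ↦ M i j) (Set.finite_range _).bddAbove j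

theorem stmt10_general [Fintype r] [DecidableEq r] [DecidableEq m] {F : Matrix d r 𝕜}
    {K : Matrix r ℓ 𝕜} {π : m ≃ r ⊕ ℓ} {A N Ar Nbar : Matrix d m 𝕜} {N1 Fhat : Matrix d r 𝕜}
    {N2 Bhat : Matrix d ℓ 𝕜} {σ μ : ℝ}
    (hA : ∀ i j, A i j = Sum.elim (F i) ((F * K) i) (π j))
    (hAr : ‖A + N - Ar‖ ≤ ‖N‖) (hNbar : Nbar = N - (A + N - Ar))
    (hN1 : ∀ i a, N1 i a = Nbar i (π.symm (Sum.inl a)))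
    (hN2 : ∀ i b, N2 i b = Nbar i (π.symm (Sum.inr b)))
    (hFhat : Fhat = F + N1) (hBhat : Bhat = Fhat * K + (-(N1 * K) + N2))
    (hσ : 0 ≤ σ) (hFσ : BoundedBelow F σ) (hμ : 0 ≤ μ) (hKμ : ∀ b, ‖toLp 2 (K.col b)‖ ≤ μ)
    (hN : ‖N‖ < σ * (1 - μ) / 4) :
    IsUnit (Fhatᴴ * Fhat) ∧
    (∀ a, Ar.col (π.symm (Sum.inl a)) = Fhat.col a) ∧
    (∀ b, Ar.col (π.symm (Sum.inr b)) = Bhat.col b) ∧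
    (∀ a, star (Fhat.col a) ⬝ᵥ (ellipsoidMatrix Fhat *ᵥ Fhat.col a) = 1) ∧
    (∀ b, star (Bhat.col b) ⬝ᵥ (ellipsoidMatrix Fhat *ᵥ Bhat.col b) < 1) ∧
    {j | star (Ar.col j) ⬝ᵥ (ellipsoidMatrix Fhat *ᵥ Ar.col j) = 1} =
      {j | ∃ a, π j = Sum.inl a} ∧
    ‖(A + N).submatrix id (π.symm ∘ Sum.inl) - F‖ ≤ ‖N‖ := by
  have hinl : Function.Injective (π.symm ∘ Sum.inl) := π.symm.injective.comp Sum.inl_injective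
  have hAr_eq : Ar = A + Nbar := by rw [hNbar]; abel
  have hNbar_le : ‖Nbar‖ ≤ 2 * ‖N‖ := by grw [hNbar, norm_sub_le, hAr, two_mul]
  have hN1_le : ‖N1‖ ≤ 2 * ‖N‖ := by
    have hN1_eq : N1 = Nbar.submatrix id (π.symm ∘ Sum.inl) := by ext i a; exact hN1 i a
    grw [hN1_eq, l2_opNorm_submatrix_id_le Nbar hinl, hNbar_le]
  have hN2_le (b : ℓ) : ‖toLp 2 (N2.col b)‖ ≤ 2 * ‖N‖ := by
    have hN2_eq : N2.col b = Nbar.col (π.symm (Sum.inr b)) := by ext i; exact hN2 i b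
    grw [hN2_eq, norm_toLp_col_le, hNbar_le]
  have hAr_inl (a : r) : Ar.col (π.symm (Sum.inl a)) = Fhat.col a := by
    ext i; simp [hAr_eq, hA, hFhat, hN1]
  have hAr_inr (b : ℓ) : Ar.col (π.symm (Sum.inr b)) = Bhat.col b := by
    ext i; simp [hAr_eq, hA, hBhat, hFhat, hN2, Matrix.add_mul]
  have hBhat_col (b : ℓ) : Bhat.col b = F *ᵥ K.col b + N2.col b := by
    ext i; simp [hBhat, hFhat, Matrix.add_mul, mul_apply, mulVec, dotProduct]
  have hgram : IsUnit (Fhatᴴ * Fhat) := by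
    rw [hFhat]
    have hpos : 0 < σ - ‖N1‖ := by linarith [norm_nonneg N, mul_nonneg hσ hμ]
    exact (hFσ.add N1).isUnit_conjTranspose_mul_self hpos
  have hFhat_quad := dotProduct_ellipsoidMatrix_mulVec_col hgram
  have hBhat_quad (b : ℓ) : star (Bhat.col b) ⬝ᵥ (ellipsoidMatrix Fhat *ᵥ Bhat.col b) < 1 := by
    rw [hBhat_col, hFhat]
    exact hFσ.dotProduct_ellipsoidMatrix_add_mulVec_lt_one hσ hN1_le (hN2_le b)
      (by linarith [mul_le_mul_of_nonneg_left (hKμ b) hσ])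
  refine ⟨hgram, hAr_inl, hAr_inr, hFhat_quad, hBhat_quad, ?_, ?_⟩
  · ext j
    obtain ⟨a | b, rfl⟩ := π.symm.surjective j
    · simp [hAr_inl, hFhat_quad]
    · simp [hAr_inr, (hBhat_quad b).ne]
  · have hAN_sub : (A + N).submatrix id (π.symm ∘ Sum.inl) - F =
        N.submatrix id (π.symm ∘ Sum.inl) := by
      ext i a; simp [hA]
    rw [hAN_sub]
    exact l2_opNorm_submatrix_id_le N hinl

end L2Norm

/-- Theorem 2 of the paper (robustness) — if `‖N‖₂ < ε = σ(1 − μ)/4`,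
then with `L = F̂(F̂ᵀF̂)⁻²F̂ᵀ`, the columns of `Ã^r` lying on the ellipsoid `xᵀLx = 1`
are exactly those at the indices where `Π` places the columns of `F̂`, and the
corresponding submatrix `Ã(𝓘)` of `Ã = A + N` satisfies `‖Ã(𝓘) − F‖₂ ≤ ‖N‖₂ < ε`.
The column arrangement is encoded by a bijection `π : Fin m ≃ Fin r ⊕ Fin ℓ`. -/
theorem stmt10 (d m r ℓ : ℕ)
    (F : Matrix (Fin d) (Fin r) ℝ) (hF : F.rank = r)
    (K : Matrix (Fin r) (Fin ℓ) ℝ) (hKpos : ∀ a i, 0 ≤ K a i)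
    (hK1 : ∀ i : Fin ℓ, oneNorm (fun a => K a i) = 1)
    (π : Fin m ≃ (Fin r ⊕ Fin ℓ))
    (A : Matrix (Fin d) (Fin m) ℝ)
    (hA : ∀ i j, A i j = Sum.elim (fun a => F i a) (fun b => (F * K) i b) (π j))
    (N : Matrix (Fin d) (Fin m) ℝ)
    (Ar : Matrix (Fin d) (Fin m) ℝ) (hAr_rank : Ar.rank ≤ r)
    (hAr_best : ∀ B : Matrix (Fin d) (Fin m) ℝ, B.rank ≤ r →
      specNorm (A + N - Ar) ≤ specNorm (A + N - B))
    (Nbar : Matrix (Fin d) (Fin m) ℝ) (hNbar : Nbar = N - (A + N - Ar))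
    (N1 : Matrix (Fin d) (Fin r) ℝ) (hN1 : ∀ i a, N1 i a = Nbar i (π.symm (Sum.inl a)))
    (N2 : Matrix (Fin d) (Fin ℓ) ℝ) (hN2 : ∀ i b, N2 i b = Nbar i (π.symm (Sum.inr b)))
    (Fhat : Matrix (Fin d) (Fin r) ℝ) (hFhat : Fhat = F + N1)
    (Bhat : Matrix (Fin d) (Fin ℓ) ℝ) (hBhat : Bhat = Fhat * K + (-(N1 * K) + N2))
    (σ μ ε : ℝ) (hσ : σ = sigmaMin F) (hμ : μ = ⨆ i : Fin ℓ, euclNorm (fun a => K a i))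
    (hε : ε = σ * (1 - μ) / 4)
    (hN : specNorm N < ε)
    (L : Matrix (Fin d) (Fin d) ℝ)
    (hL : L = Fhat * ((Fhatᵀ * Fhat)⁻¹ * (Fhatᵀ * Fhat)⁻¹) * Fhatᵀ) :
    IsUnit (Fhatᵀ * Fhat) ∧
    (∀ a : Fin r, (fun i => Ar i (π.symm (Sum.inl a))) = fun i => Fhat i a) ∧
    (∀ b : Fin ℓ, (fun i => Ar i (π.symm (Sum.inr b))) = fun i => Bhat i b) ∧
    (∀ a : Fin r, (fun i => Fhat i a) ⬝ᵥ (L *ᵥ fun i => Fhat i a) = 1) ∧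
    (∀ b : Fin ℓ, (fun i => Bhat i b) ⬝ᵥ (L *ᵥ fun i => Bhat i b) < 1) ∧
    ({i : Fin m | (fun c => Ar c i) ⬝ᵥ (L *ᵥ fun c => Ar c i) = 1} =
      {i : Fin m | ∃ a : Fin r, π i = Sum.inl a}) ∧
    specNorm (Matrix.of (fun i a => (A + N) i (π.symm (Sum.inl a))) - F) ≤ specNorm N ∧
    specNorm N < ε := by
  have hAr : specNorm (A + N - Ar) ≤ specNorm N := by
    simpa using hAr_best A (by simpa using rank_le_card_of_eq_sumElim hA)
  subst hσ hμ hε hL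
  -- Over `ℝ`, `specNorm` is definitionally the L2 operator norm and `ᵀ` is definitionally `ᴴ`.
  obtain ⟨hgram, hinl, hinr, hFhat_quad, hBhat_quad, hset, hsub⟩ :=
    stmt10_general hA hAr hNbar hN1 hN2 hFhat hBhat (sigmaMin_nonneg F) (boundedBelow_sigmaMin F)
      (Real.iSup_nonneg fun _ ↦ Real.sqrt_nonneg _) (norm_toLp_col_le_iSup_euclNorm K) hN
  exact ⟨hgram, hinl, hinr, hFhat_quad, hBhat_quad, hset, hsub, hN⟩
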